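/- Let Ω be a nonempty closed convex cone of H₂ and K(u) := φ(u) + Ω for a map φ : Ω → Ω. Assume (H₁)–(H₄) and (H₅') hold and L < 1, where L := (2·l_K²/η_G²)(l_G·√(4l_G²+2η_G²) + 2l_G² + η_G²). Then the nonlocal fractional differential quasi-complementarity problem has a unique solution: there exists exactly one pair (x,u) ∈ C(I,H₁) × C(I,Ω) such that x(s) = x₀ + ψ(x) + (1/Γ(q))·∫₀^s (s−ζ)^{q−1}[f(ζ,x(ζ)) + g(ζ,x(ζ),u(ζ))] dζ for all s ∈ I, and for every s ∈ I: u(s) ∈ φ(u(s)) + Ω, G(s,x(s),u(s)) ∈ Ω* and ⟨G(s,x(s),u(s)), u(s) − φ(u(s))⟩ = 0, where Ω* := {w ∈ H₂ : ⟨w,v⟩ ≥ 0 for all v ∈ Ω}. -/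

import Mathlib

/-!
For fixed time `s` and state `x`, the complementarity conditions are a quasi-variational inequality
on `K u = φ u + Ω`, because `Ω` is a convex cone.

A strongly pseudomonotone variational inequality on a fixed closed convex set is solvable
(`exists_vi`): the candidate sets for the Minty inequality are closed, convex and bounded, and they
form a KKM family, so they have a common point by the elementary KKM principle `kkm_finset`
together with weak compactness (`iInter_nonempty_of_finite`).

Comparing two such inequalities through a projection step of size `μ → ∞` (`vi_estimate`) gives
`‖u₁ - u₂‖ ≤ l_K (1 + l_G/η_G) ‖w₁ - w₂‖ + (l_G/η_G) (|s₁ - s₂| + ‖x₁ - x₂‖)` for the solutions on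
`K w₁` and `K w₂`. Since `L < 1` forces `l_K (1 + l_G/η_G) < 1`, the quasi-variational inequality
has a unique solution `U s x` (the fixed point of `exists_qvi`). Taking `wᵢ = uᵢ` shows that `U` is
Lipschitz, and `lipschitz_const` bounds its constant by `√(κ/(1-L))`.

The problem thus reduces to a fractional Volterra equation with the Lipschitz right-hand side
`f s x + g s x (U s x)`, of constant `l_f + ξ`; its solution operator is a contraction in the norm
`sup_s e^{-γ s} ‖x s‖` (`volterra_unique`).
-/

open scoped RealInnerProductSpace
open Set

/-- Metric projection onto a set `C` of a real Hilbert space, characterized by the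
variational inequality `⟪w - x, v - w⟫ ≥ 0` for all `v ∈ C`. -/
noncomputable def proj {H : Type*} [NormedAddCommGroup H] [InnerProductSpace ℝ H]
    (C : Set H) (x : H) : H :=
  letI : Nonempty H := ⟨0⟩
  Classical.epsilon fun w => w ∈ C ∧ ∀ v ∈ C, 0 ≤ ⟪w - x, v - w⟫

/-- The constant `L = (2 l_K²/η_G²)(l_G √(4l_G²+2η_G²) + 2l_G² + η_G²)`. -/
noncomputable def Lconst (lK lG ηG : ℝ) : ℝ :=
  2 * lK ^ 2 / ηG ^ 2 * (lG * Real.sqrt (4 * lG ^ 2 + 2 * ηG ^ 2) + 2 * lG ^ 2 + ηG ^ 2)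

/-- The constant `κ = 2 l_G (√(l_G²+η_G²/2)+l_G)² / (η_G² √(l_G²+η_G²/2))`. -/
noncomputable def kconst (lG ηG : ℝ) : ℝ :=
  2 * lG * (Real.sqrt (lG ^ 2 + ηG ^ 2 / 2) + lG) ^ 2 /
    (ηG ^ 2 * Real.sqrt (lG ^ 2 + ηG ^ 2 / 2))

/-- The constant `ξ = l_g (1 + √(κ/(1-L)))`. -/
noncomputable def xiconst (lg lK lG ηG : ℝ) : ℝ :=
  lg * (1 + Real.sqrt (kconst lG ηG / (1 - Lconst lK lG ηG)))

/-- `(x, u)` is a solution of the nonlocal fractional differential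
quasi-complementarity problem (NFDQCP), in the integrated sense. -/
def IsNFDQCPSol {H₁ H₂ : Type*} [NormedAddCommGroup H₁] [InnerProductSpace ℝ H₁]
    [NormedAddCommGroup H₂] [InnerProductSpace ℝ H₂]
    (T q : ℝ) (x₀ : H₁) (ψ : (ℝ → H₁) → H₁) (f : ℝ → H₁ → H₁)
    (g : ℝ → H₁ → H₂ → H₁) (G : ℝ → H₁ → H₂ → H₂) (Ω : Set H₂) (φ : H₂ → H₂)
    (x : ℝ → H₁) (u : ℝ → H₂) : Prop :=
  ContinuousOn x (Icc 0 T) ∧ ContinuousOn u (Icc 0 T) ∧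
  (∀ s ∈ Icc (0:ℝ) T, u s ∈ Ω) ∧
  (∀ s ∈ Icc (0:ℝ) T,
    x s = x₀ + ψ x + (Real.Gamma q)⁻¹ •
      ∫ ζ in (0:ℝ)..s, ((s - ζ) ^ (q - 1)) • (f ζ (x ζ) + g ζ (x ζ) (u ζ))) ∧
  (∀ s ∈ Icc (0:ℝ) T,
    u s ∈ (fun w => φ (u s) + w) '' Ω ∧
    (∀ v ∈ Ω, 0 ≤ ⟪G s (x s) (u s), v⟫) ∧
    ⟪G s (x s) (u s), u s - φ (u s)⟫ = 0)

/-! ### Finite intersections: an elementary KKM principle -/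

/-- The KKM principle for closed convex values. If some `S i` were missed by every point of the
compact hull of the partial intersection points `y j ∈ ⋂ i ≠ j, S i`, then a minimizer of
`max_i d(·, S i)` on this hull would lie in some `S j`, and moving it slightly towards `y j` would
decrease all the distances to the other sets without bringing the one to `S j` up to the
minimum. -/
theorem kkm_finset {ι E : Type*} [NormedAddCommGroup E] [NormedSpace ℝ E]
    (x : ι → E) (S : ι → Set E) (hcl : ∀ i, IsClosed (S i)) (hcv : ∀ i, Convex ℝ (S i))
    (hkkm : ∀ t : Finset ι, ∀ z ∈ convexHull ℝ (x '' (t : Set ι)), ∃ i ∈ t, z ∈ S i)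
    (s : Finset ι) (hs : s.Nonempty) :
    ∃ z ∈ convexHull ℝ (x '' (s : Set ι)), ∀ i ∈ s, z ∈ S i := by
  classical
  induction s using Finset.strongInduction with
  | H s ih =>
    have hxS : ∀ i, x i ∈ S i := by
      intro i
      obtain ⟨j, hj, h⟩ := hkkm {i} (x i) (subset_convexHull ℝ _ ⟨i, by simp, rfl⟩)
      rw [Finset.mem_singleton] at hj
      rwa [hj] at h
    by_cases hcard : s.card = 1
    · obtain ⟨i, rfl⟩ := Finset.card_eq_one.1 hcard
      exact ⟨x i, subset_convexHull ℝ _ ⟨i, by simp, rfl⟩, by simpa using hxS i⟩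
    have hcard2 : 1 < s.card := by have := hs.card_pos; omega
    have hex : ∀ i, ∃ z, i ∈ s →
        z ∈ convexHull ℝ (x '' (s : Set ι)) ∧ ∀ j ∈ s, j ≠ i → z ∈ S j := by
      intro i
      by_cases hi : i ∈ s
      · have hne : (s.erase i).Nonempty := by
          rw [← Finset.card_pos, Finset.card_erase_of_mem hi]; omega
        obtain ⟨z, hz, hz'⟩ := ih _ (Finset.erase_ssubset hi) hne
        refine ⟨z, fun _ => ⟨convexHull_mono (Set.image_mono ?_) hz,
          fun j hj hji => hz' j (Finset.mem_erase.2 ⟨hji, hj⟩)⟩⟩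
        exact_mod_cast Finset.erase_subset i s
      · exact ⟨0, fun h => absurd h hi⟩
    choose y hy using hex
    have hYc : IsCompact (convexHull ℝ (y '' (s : Set ι))) :=
      Set.Finite.isCompact_convexHull ℝ (s.finite_toSet.image y)
    have hYne : (convexHull ℝ (y '' (s : Set ι))).Nonempty :=
      convexHull_nonempty_iff.2 ((Finset.coe_nonempty.2 hs).image y)
    have hYsub : convexHull ℝ (y '' (s : Set ι)) ⊆ convexHull ℝ (x '' (s : Set ι)) := by
      refine convexHull_min ?_ (convex_convexHull ℝ _)
      rintro _ ⟨i, hi, rfl⟩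
      exact (hy i hi).1
    obtain ⟨z, hzY, hzmin⟩ := hYc.exists_isMinOn hYne
      (f := fun z => s.sup' hs (fun i => Metric.infDist z (S i)))
      (Continuous.finset_sup'_apply hs
        (fun i _ => Metric.continuous_infDist_pt (S i))).continuousOn
    refine ⟨z, hYsub hzY, ?_⟩
    set δ := s.sup' hs (fun i => Metric.infDist z (S i)) with hδ
    have hle : ∀ i ∈ s, Metric.infDist z (S i) ≤ δ := fun i hi =>
      Finset.le_sup' (fun i => Metric.infDist z (S i)) hi
    by_cases hδ0 : δ ≤ 0
    · intro i hi
      rw [(hcl i).mem_iff_infDist_zero ⟨x i, hxS i⟩]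
      exact le_antisymm ((hle i hi).trans hδ0) Metric.infDist_nonneg
    exfalso
    push Not at hδ0
    obtain ⟨i, hi, hzi⟩ := hkkm s z (hYsub hzY)
    obtain ⟨t, ht0, ht1, htδ⟩ : ∃ t : ℝ, 0 < t ∧ t < 1 ∧ t * ‖y i - z‖ < δ := by
      have hp : 0 < ‖y i - z‖ + δ := by positivity
      refine ⟨δ / (‖y i - z‖ + δ) / 2, by positivity, ?_, ?_⟩
      · have : δ / (‖y i - z‖ + δ) ≤ 1 := by
          rw [div_le_one hp]; linarith [norm_nonneg (y i - z)]
        linarith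
      · have : δ / (‖y i - z‖ + δ) / 2 * ‖y i - z‖ ≤ δ / 2 := by
          rw [div_div, div_mul_eq_mul_div, div_le_div_iff₀ (by positivity) (by norm_num)]
          nlinarith [norm_nonneg (y i - z)]
        linarith
    have hzt : (1 - t) • z + t • y i ∈ convexHull ℝ (y '' (s : Set ι)) :=
      (convex_convexHull ℝ _) hzY (subset_convexHull ℝ _ ⟨i, hi, rfl⟩)
        (by linarith) ht0.le (by ring)
    have hmin := hzmin hzt
    have hlt : s.sup' hs (fun j => Metric.infDist ((1 - t) • z + t • y i) (S j)) < δ := by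
      rw [Finset.sup'_lt_iff]
      intro j hj
      by_cases hji : j = i
      · subst hji
        refine (Metric.infDist_le_dist_of_mem hzi).trans_lt ?_
        have : (1 - t) • z + t • y j - z = t • (y j - z) := by module
        rwa [dist_eq_norm, this, norm_smul, Real.norm_of_nonneg ht0.le]
      · have hd : Metric.infDist z (S j) < δ / (1 - t) := by
          refine (hle j hj).trans_lt ?_
          rw [lt_div_iff₀ (by linarith)]
          nlinarith
        obtain ⟨p, hp, hpd⟩ := (Metric.infDist_lt_iff ⟨x j, hxS j⟩).1 hd
        refine (Metric.infDist_le_dist_of_mem (hcv j hp ((hy i hi).2 j hj hji)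
          (show 0 ≤ 1 - t by linarith) ht0.le (by ring))).trans_lt ?_
        have : (1 - t) • z + t • y i - ((1 - t) • p + t • y i) = (1 - t) • (z - p) := by module
        rw [dist_eq_norm, this, norm_smul, Real.norm_of_nonneg (by linarith), ← dist_eq_norm]
        rwa [lt_div_iff₀ (by linarith), mul_comm] at hpd
    exact absurd hmin (not_le.2 hlt)

theorem exists_proj {H : Type*} [NormedAddCommGroup H] [InnerProductSpace ℝ H]
    [CompleteSpace H] {C : Set H} (hne : C.Nonempty) (hcl : IsClosed C) (hcv : Convex ℝ C)
    (p : H) : ∃ w, w ∈ C ∧ ∀ v ∈ C, 0 ≤ ⟪w - p, v - w⟫ := by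
  obtain ⟨w, hw, h⟩ := exists_norm_eq_iInf_of_complete_convex hne hcl.isComplete hcv p
  rw [norm_eq_iInf_iff_real_inner_le_zero hcv hw] at h
  refine ⟨w, hw, fun v hv => ?_⟩
  have h1 := h v hv
  have h2 : ⟪w - p, v - w⟫ = -⟪p - w, v - w⟫ := by rw [← inner_neg_left, neg_sub]
  linarith

theorem proj_spec {H : Type*} [NormedAddCommGroup H] [InnerProductSpace ℝ H]
    [CompleteSpace H] {C : Set H} (hne : C.Nonempty) (hcl : IsClosed C) (hcv : Convex ℝ C)
    (p : H) : proj C p ∈ C ∧ ∀ v ∈ C, 0 ≤ ⟪proj C p - p, v - proj C p⟫ :=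
  Classical.epsilon_spec (exists_proj hne hcl hcv p)

/-- Weak compactness of bounded closed convex sets, as a finite intersection property: the
minimal norm points of the finite intersections form a Cauchy net. -/
theorem iInter_nonempty_of_finite {ι H : Type*} [NormedAddCommGroup H] [InnerProductSpace ℝ H]
    [CompleteSpace H] (M : ι → Set H) (hcl : ∀ i, IsClosed (M i)) (hcv : ∀ i, Convex ℝ (M i))
    (i₀ : ι) (R : ℝ) (hR : ∀ x ∈ M i₀, ‖x‖ ≤ R)
    (hfin : ∀ s : Finset ι, s.Nonempty → ∃ z, ∀ i ∈ s, z ∈ M i) :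
    ∃ z, ∀ i, z ∈ M i := by
  classical
  have hex : ∀ A : Finset ι, ∃ p, (∀ i ∈ insert i₀ A, p ∈ M i) ∧
      ∀ v, (∀ i ∈ insert i₀ A, v ∈ M i) → 0 ≤ ⟪p, v - p⟫ := by
    intro A
    obtain ⟨z, hz⟩ := hfin (insert i₀ A) (Finset.insert_nonempty _ _)
    obtain ⟨w, hw, h⟩ := exists_proj (C := ⋂ i ∈ insert i₀ A, M i) ⟨z, by simpa using hz⟩
      (isClosed_biInter fun i _ => hcl i) (convex_iInter₂ fun i _ => hcv i) 0
    simp only [mem_iInter] at hw h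
    exact ⟨w, hw, fun v hv => by simpa using h v hv⟩
  choose p hp hpv using hex
  have hkey : ∀ A B : Finset ι, A ⊆ B → ‖p B - p A‖ ^ 2 ≤ ‖p B‖ ^ 2 - ‖p A‖ ^ 2 := by
    intro A B hAB
    have h := hpv A (p B) fun i hi => hp B i (Finset.insert_subset_insert _ hAB hi)
    rw [inner_sub_right, real_inner_self_eq_norm_sq] at h
    rw [norm_sub_sq_real, real_inner_comm]
    linarith
  have hmono : Monotone fun A => ‖p A‖ ^ 2 := fun A B hAB => by
    have := hkey A B hAB
    show ‖p A‖ ^ 2 ≤ ‖p B‖ ^ 2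
    nlinarith [sq_nonneg ‖p B - p A‖]
  have hbdd : BddAbove (range fun A => ‖p A‖ ^ 2) := by
    refine ⟨R ^ 2, ?_⟩
    rintro _ ⟨A, rfl⟩
    exact pow_le_pow_left₀ (norm_nonneg _) (hR _ (hp A i₀ (by simp))) 2
  have hcau : CauchySeq p := by
    rw [Metric.cauchySeq_iff']
    intro ε hε
    obtain ⟨N, hN⟩ := exists_lt_of_lt_ciSup
      (show (⨆ A, ‖p A‖ ^ 2) - ε ^ 2 < ⨆ A, ‖p A‖ ^ 2 by nlinarith)
    refine ⟨N, fun n hn => ?_⟩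
    have h1 := hkey N n hn
    have h2 : ‖p n‖ ^ 2 ≤ ⨆ A, ‖p A‖ ^ 2 := le_ciSup hbdd n
    rw [dist_eq_norm]
    refine lt_of_pow_lt_pow_left₀ 2 hε.le ?_
    linarith
  obtain ⟨z, hz⟩ := cauchySeq_tendsto_of_complete hcau
  refine ⟨z, fun i => (hcl i).mem_of_tendsto hz ?_⟩
  filter_upwards [Filter.eventually_ge_atTop ({i} : Finset ι)] with A hA
  exact hp A i (Finset.mem_insert_of_mem (hA (by simp)))

/-! ### Strongly pseudomonotone variational inequalities -/

/-- Existence for a strongly pseudomonotone variational inequality. The sets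
`{x ∈ C | η ‖y - x‖² ≤ ⟪F y, y - x⟫}` are closed, convex, bounded and form a KKM family, so they
share a point; it solves the Minty inequality, hence by continuity the Stampacchia one. -/
theorem exists_vi {H : Type*} [NormedAddCommGroup H] [InnerProductSpace ℝ H]
    [CompleteSpace H] {C : Set H} (hne : C.Nonempty) (hcl : IsClosed C) (hcv : Convex ℝ C)
    (F : H → H) (hF : ContinuousOn F C) (η : ℝ) (hη : 0 < η)
    (hpm : ∀ a ∈ C, ∀ b ∈ C, 0 ≤ ⟪F b, a - b⟫ → η * ‖a - b‖ ^ 2 ≤ ⟪F a, a - b⟫) :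
    ∃ z ∈ C, ∀ v ∈ C, 0 ≤ ⟪F z, v - z⟫ := by
  obtain ⟨y₀, hy₀⟩ := hne
  let M : C → Set H := fun y => {x | x ∈ C ∧ η * ‖(y : H) - x‖ ^ 2 ≤ ⟪F y, (y : H) - x⟫}
  have hMcl : ∀ y, IsClosed (M y) := fun y =>
    hcl.inter (isClosed_le (f := fun x => η * ‖(y : H) - x‖ ^ 2)
      (g := fun x => ⟪F y, (y : H) - x⟫) (by fun_prop) (by fun_prop))
  have hMcv : ∀ y, Convex ℝ (M y) := by
    rintro y a ⟨ha, ha'⟩ b ⟨hb, hb'⟩ s t hs ht hst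
    refine ⟨hcv ha hb hs ht hst, ?_⟩
    have e : (y : H) - (s • a + t • b) = s • ((y : H) - a) + t • ((y : H) - b) := by
      obtain rfl : t = 1 - s := by linarith
      module
    have h1 : ‖(y : H) - (s • a + t • b)‖ ≤ s * ‖(y : H) - a‖ + t * ‖(y : H) - b‖ := by
      rw [e]
      refine (norm_add_le _ _).trans ?_
      rw [norm_smul, norm_smul, Real.norm_of_nonneg hs, Real.norm_of_nonneg ht]
    have h2 : ‖(y : H) - (s • a + t • b)‖ ^ 2 ≤
        s * ‖(y : H) - a‖ ^ 2 + t * ‖(y : H) - b‖ ^ 2 := by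
      refine (pow_le_pow_left₀ (norm_nonneg _) h1 2).trans ?_
      obtain rfl : t = 1 - s := by linarith
      nlinarith [mul_nonneg (mul_nonneg hs ht) (sq_nonneg (‖(y : H) - a‖ - ‖(y : H) - b‖))]
    rw [e, inner_add_right, real_inner_smul_right, real_inner_smul_right]
    rw [e] at h2
    calc _ ≤ η * (s * ‖(y : H) - a‖ ^ 2 + t * ‖(y : H) - b‖ ^ 2) :=
          mul_le_mul_of_nonneg_left h2 hη.le
      _ = s * (η * ‖(y : H) - a‖ ^ 2) + t * (η * ‖(y : H) - b‖ ^ 2) := by ring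
      _ ≤ _ := by gcongr
  have hkkm : ∀ t : Finset C, ∀ z ∈ convexHull ℝ ((fun y : C => (y : H)) '' (t : Set C)),
      ∃ i ∈ t, z ∈ M i := by
    intro t z hz
    have hzC : z ∈ C := by
      refine convexHull_min ?_ hcv hz
      rintro _ ⟨y, _, rfl⟩
      exact y.2
    by_contra! hcon
    have hneg : ∀ y ∈ t, ⟪F z, (y : H) - z⟫ < 0 := by
      intro y hy
      by_contra! h
      exact hcon y hy ⟨hzC, hpm y y.2 z hzC h⟩
    -- the points of `t` lie in an open half-space avoiding `z`, and so does their hull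
    have hhalf : Convex ℝ {v : H | ⟪F z, v⟫ < ⟪F z, z⟫} :=
      convex_halfSpace_lt (f := fun v : H => ⟪F z, v⟫)
        ⟨fun a b => inner_add_right _ _ _, fun c a => real_inner_smul_right _ _ _⟩ _
    have : z ∈ {v : H | ⟪F z, v⟫ < ⟪F z, z⟫} := by
      refine convexHull_min ?_ hhalf hz
      rintro _ ⟨y, hy, rfl⟩
      have := hneg y hy
      rw [inner_sub_right] at this
      simpa using this
    exact lt_irrefl ⟪F z, z⟫ this
  have hbd : ∀ x ∈ M ⟨y₀, hy₀⟩, ‖x‖ ≤ ‖y₀‖ + ‖F y₀‖ / η := by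
    rintro x ⟨_, hx⟩
    simp only at hx
    have h1 := hx.trans (real_inner_le_norm _ _)
    have h2 : ‖y₀ - x‖ ≤ ‖F y₀‖ / η := by
      rw [le_div_iff₀ hη]
      by_contra! h
      have h0 : 0 < ‖y₀ - x‖ := by
        by_contra! h0
        have : ‖y₀ - x‖ = 0 := le_antisymm h0 (norm_nonneg _)
        rw [this] at h
        linarith [norm_nonneg (F y₀)]
      nlinarith
    have h3 : ‖x‖ ≤ ‖y₀‖ + ‖y₀ - x‖ := by
      have := norm_sub_le y₀ (y₀ - x)
      rwa [sub_sub_cancel] at this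
    linarith
  obtain ⟨z, hz⟩ := iInter_nonempty_of_finite M hMcl hMcv ⟨y₀, hy₀⟩ _ hbd fun s hs => by
    obtain ⟨z, _, h⟩ := kkm_finset (fun y : C => (y : H)) M hMcl hMcv hkkm s hs
    exact ⟨z, h⟩
  have hzC : z ∈ C := (hz ⟨y₀, hy₀⟩).1
  refine ⟨z, hzC, fun v hv => ?_⟩
  have hseg : ∀ t ∈ Icc (0:ℝ) 1, z + t • (v - z) ∈ C := fun t ht => by
    have := hcv hzC hv (show 0 ≤ 1 - t by linarith [ht.2]) ht.1 (by ring)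
    convert this using 1
    module
  have hc : ContinuousOn (fun t : ℝ => ⟪F (z + t • (v - z)), v - z⟫) (Icc 0 1) :=
    (hF.comp (by fun_prop) hseg).inner continuousOn_const
  have hc0 : Filter.Tendsto (fun t : ℝ => ⟪F (z + t • (v - z)), v - z⟫)
      (nhdsWithin 0 (Ioo 0 1)) (nhds ⟪F z, v - z⟫) := by
    have := (hc 0 (by simp)).mono_left (nhdsWithin_mono 0 Ioo_subset_Icc_self)
    simpa using this
  have : (nhdsWithin (0:ℝ) (Ioo 0 1)).NeBot := by
    rw [← mem_closure_iff_nhdsWithin_neBot, closure_Ioo (by norm_num)]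
    simp
  refine ge_of_tendsto hc0 ?_
  filter_upwards [self_mem_nhdsWithin] with t ht
  have h := (hz ⟨_, hseg t ⟨ht.1.le, ht.2.le⟩⟩).2
  simp only [add_sub_cancel_left, real_inner_smul_right] at h
  have h' : 0 ≤ t * ⟪F (z + t • (v - z)), v - z⟫ := le_trans (by positivity) h
  exact nonneg_of_mul_nonneg_right h' ht.1

/-- Perturbation estimate for strongly pseudomonotone variational inequalities. The comparison
point on `K₁` is the projection of `u₂ - μ • F₂ u₂`, whose projection on `K₂` is `u₂` itself; the
estimate follows as `μ → ∞`. -/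
theorem vi_estimate {H : Type*} [NormedAddCommGroup H] [InnerProductSpace ℝ H]
    [CompleteSpace H] {K₁ K₂ : Set H} (hcl₁ : IsClosed K₁) (hcv₁ : Convex ℝ K₁)
    (hcl₂ : IsClosed K₂) (hcv₂ : Convex ℝ K₂) (F₁ F₂ : H → H) {u₁ u₂ : H}
    (hu₁ : u₁ ∈ K₁) (hu₂ : u₂ ∈ K₂) (hv₁ : ∀ v ∈ K₁, 0 ≤ ⟪F₁ u₁, v - u₁⟫)
    (hv₂ : ∀ v ∈ K₂, 0 ≤ ⟪F₂ u₂, v - u₂⟫) {η l d δ : ℝ} (hη : 0 < η) (hl : 0 < l)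
    (hd0 : 0 ≤ d) (hd : ∀ p, ‖proj K₂ p - proj K₁ p‖ ≤ d)
    (hpm : ∀ a ∈ K₁, ∀ b ∈ K₁, 0 ≤ ⟪F₁ b, a - b⟫ → η * ‖a - b‖ ^ 2 ≤ ⟪F₁ a, a - b⟫)
    (hlip : ∀ a ∈ K₁, ‖F₁ a - F₂ u₂‖ ≤ l * (δ + ‖a - u₂‖)) :
    ‖u₁ - u₂‖ ≤ d * (1 + l / η) + l / η * δ := by
  have key : ∀ μ : ℝ, 0 < μ → ‖u₁ - u₂‖ ≤ d * (1 + l / η) + l / η * δ + d / (μ * η) := by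
    intro μ hμ
    have hu₂p : proj K₂ (u₂ - μ • F₂ u₂) = u₂ := by
      obtain ⟨hw, hwv⟩ := proj_spec ⟨u₂, hu₂⟩ hcl₂ hcv₂ (u₂ - μ • F₂ u₂)
      set w := proj K₂ (u₂ - μ • F₂ u₂)
      have h1 := hwv u₂ hu₂
      have h2 := hv₂ w hw
      have h3 : ⟪w - (u₂ - μ • F₂ u₂), u₂ - w⟫ = -‖w - u₂‖ ^ 2 - μ * ⟪F₂ u₂, w - u₂⟫ := by
        rw [← real_inner_self_eq_norm_sq, ← real_inner_smul_left, ← inner_neg_left,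
          ← inner_sub_left, ← neg_sub w u₂, inner_neg_right, ← inner_neg_left]
        congr 1
        module
      have h4 : ‖w - u₂‖ ^ 2 ≤ 0 := by nlinarith [mul_nonneg hμ.le h2]
      have h5 : ‖w - u₂‖ = 0 := by nlinarith [norm_nonneg (w - u₂)]
      exact sub_eq_zero.1 (norm_eq_zero.1 h5)
    obtain ⟨hw, hwv⟩ := proj_spec ⟨u₁, hu₁⟩ hcl₁ hcv₁ (u₂ - μ • F₂ u₂)
    have he := hd (u₂ - μ • F₂ u₂)
    rw [hu₂p] at he
    set w := proj K₁ (u₂ - μ • F₂ u₂)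
    rw [norm_sub_rev] at he
    have h1 := hpm w hw u₁ hu₁ (hv₁ w hw)
    have h2 := hwv u₁ hu₁
    have h3 : ⟪w - (u₂ - μ • F₂ u₂), u₁ - w⟫ =
        -⟪w - u₂, w - u₁⟫ + μ * ⟪F₁ w - F₂ u₂, w - u₁⟫ - μ * ⟪F₁ w, w - u₁⟫ := by
      rw [← real_inner_smul_left, ← real_inner_smul_left, ← inner_neg_left, ← inner_add_left,
        ← inner_sub_left, ← neg_sub w u₁, inner_neg_right, ← inner_neg_left]
      congr 1
      module
    have h4 : -⟪w - u₂, w - u₁⟫ ≤ d * ‖w - u₁‖ := by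
      rw [← inner_neg_left]
      refine (real_inner_le_norm _ _).trans ?_
      rw [norm_neg]
      gcongr
    have h5 : ⟪F₁ w - F₂ u₂, w - u₁⟫ ≤ l * (δ + d) * ‖w - u₁‖ := by
      refine (real_inner_le_norm _ _).trans ?_
      gcongr
      refine (hlip w hw).trans ?_
      gcongr
    have h6 : μ * η * ‖w - u₁‖ ^ 2 ≤ (d + μ * (l * (δ + d))) * ‖w - u₁‖ := by
      have := mul_le_mul_of_nonneg_left h1 hμ.le
      have := mul_le_mul_of_nonneg_left h5 hμ.le
      nlinarith
    have h0 : 0 ≤ δ + d := by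
      have := (norm_nonneg _).trans (hlip w hw)
      have := nonneg_of_mul_nonneg_right this hl
      linarith
    have h7 : ‖w - u₁‖ ≤ (d + μ * (l * (δ + d))) / (μ * η) := by
      rw [le_div_iff₀ (by positivity)]
      rcases (norm_nonneg (w - u₁)).eq_or_lt with h | h
      · rw [← h, zero_mul]; positivity
      · refine le_of_mul_le_mul_right ?_ h
        nlinarith
    have h8 : ‖u₁ - u₂‖ ≤ ‖w - u₁‖ + ‖w - u₂‖ := by
      rw [norm_sub_rev w u₁]
      exact norm_sub_le_norm_sub_add_norm_sub u₁ w u₂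
    have h9 : (d + μ * (l * (δ + d))) / (μ * η) = d / (μ * η) + l / η * (δ + d) := by
      field_simp
    rw [h9] at h7
    linarith
  refine le_of_forall_pos_le_add fun ε hε => ?_
  refine (key ((d + 1) / (η * ε)) (by positivity)).trans ?_
  have : d / ((d + 1) / (η * ε) * η) = d / (d + 1) * ε := by
    field_simp
  rw [this]
  have : d / (d + 1) ≤ 1 := by rw [div_le_one (by positivity)]; linarith
  nlinarith

/-! ### The constants -/

theorem sqrt_aux {l η : ℝ} :
    Real.sqrt (4 * l ^ 2 + 2 * η ^ 2) = 2 * Real.sqrt (l ^ 2 + η ^ 2 / 2) := by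
  rw [show 4 * l ^ 2 + 2 * η ^ 2 = 2 ^ 2 * (l ^ 2 + η ^ 2 / 2) by ring,
    Real.sqrt_mul (by norm_num), Real.sqrt_sq (by norm_num)]

theorem contraction_const {k l η : ℝ} (hk : 0 ≤ k) (hl : 0 < l) (hη : 0 < η)
    (hL : Lconst k l η < 1) : k * (1 + l / η) < 1 := by
  have h1 : (k * (1 + l / η)) ^ 2 ≤ Lconst k l η := by
    have h2 : (k * (1 + l / η)) ^ 2 = k ^ 2 / η ^ 2 * (η + l) ^ 2 := by
      field_simp
    rw [h2, Lconst, mul_div_assoc, mul_comm (2:ℝ), mul_assoc]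
    refine mul_le_mul_of_nonneg_left ?_ (by positivity)
    have : 0 ≤ l * Real.sqrt (4 * l ^ 2 + 2 * η ^ 2) := by positivity
    nlinarith [sq_nonneg (l - η)]
  have h3 : 0 ≤ k * (1 + l / η) := by positivity
  nlinarith

/-- The Lipschitz constant given by the perturbation estimate is at most `√(κ/(1-L))`. With
`a = √(l²+η²/2)`, `A = 4la²(a+l)`, `B = 2(a+l)²` and `p = η+l`, the claim is
`l a η² ≤ A k² + B (η - kp)²`; the minimum of the right side over `k` is `ABη²/(A+Bp²)`. -/
theorem lipschitz_const {k l η : ℝ} (hk : 0 ≤ k) (hl : 0 < l) (hη : 0 < η)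
    (hL : Lconst k l η < 1) :
    l / η / (1 - k * (1 + l / η)) ≤ Real.sqrt (kconst l η / (1 - Lconst k l η)) := by
  have hc := contraction_const hk hl hη hL
  set a := Real.sqrt (l ^ 2 + η ^ 2 / 2) with ha
  have ha0 : 0 < a := Real.sqrt_pos.2 (by positivity)
  have ha2 : a ^ 2 = l ^ 2 + η ^ 2 / 2 := Real.sq_sqrt (by positivity)
  have hLa : Lconst k l η = 4 * k ^ 2 * a * (a + l) / η ^ 2 := by
    rw [Lconst, sqrt_aux, ← ha,
      show l * (2 * a) + 2 * l ^ 2 + η ^ 2 = 2 * a * (a + l) by nlinarith]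
    ring
  have hκa : kconst l η = 2 * l * (a + l) ^ 2 / (η ^ 2 * a) := rfl
  have hη2 : η ^ 2 = 2 * a ^ 2 - 2 * l ^ 2 := by linarith
  have hp : 0 < η - k * (η + l) := by
    have : k * (1 + l / η) * η = k * (η + l) := by field_simp
    nlinarith
  have h1 : l / η / (1 - k * (1 + l / η)) = l / (η - k * (η + l)) := by
    rw [div_div]
    congr 1
    field_simp
  have hpoly : l * a * η ^ 2 ≤
      4 * l * a ^ 2 * (a + l) * k ^ 2 + 2 * (a + l) ^ 2 * (η - k * (η + l)) ^ 2 := by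
    set A := 4 * l * a ^ 2 * (a + l) with hA
    set B := 2 * (a + l) ^ 2 with hB
    have hA0 : 0 < A := by positivity
    have hB0 : 0 < B := by positivity
    have hAB : l * a * (A + B * (η + l) ^ 2) ≤ A * B := by
      have h : 2 * l * a ^ 2 + (a + l) * (η + l) ^ 2 ≤ 4 * a * (a + l) ^ 2 := by
        have e : 4 * a * (a + l) ^ 2 - (2 * l * a ^ 2 + (a + l) * (η + l) ^ 2)
            = a * ((l - η) ^ 2 + 6 * l ^ 2) + l * ((l - η) ^ 2 + 4 * l ^ 2 + η ^ 2) := by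
          linear_combination (4 * a + 6 * l) * ha2
        have : 0 ≤ a * ((l - η) ^ 2 + 6 * l ^ 2) + l * ((l - η) ^ 2 + 4 * l ^ 2 + η ^ 2) := by
          positivity
        linarith
      calc l * a * (A + B * (η + l) ^ 2)
          = 2 * l * a * (a + l) * (2 * l * a ^ 2 + (a + l) * (η + l) ^ 2) := by
            rw [hA, hB]; ring
        _ ≤ 2 * l * a * (a + l) * (4 * a * (a + l) ^ 2) := by gcongr
        _ = A * B := by rw [hA, hB]; ring
    have hsq : (A + B * (η + l) ^ 2) * (A * k ^ 2 + B * (η - k * (η + l)) ^ 2) =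
        A * B * η ^ 2 + ((A + B * (η + l) ^ 2) * k - B * (η + l) * η) ^ 2 := by ring
    have hpos : 0 < A + B * (η + l) ^ 2 := by positivity
    refine le_of_mul_le_mul_left ?_ hpos
    rw [hsq]
    nlinarith [sq_nonneg ((A + B * (η + l) ^ 2) * k - B * (η + l) * η),
      mul_le_mul_of_nonneg_right hAB (sq_nonneg η)]
  have hden : 0 < 1 - Lconst k l η := by linarith
  rw [h1]
  refine Real.le_sqrt_of_sq_le ?_
  rw [div_pow, div_le_div_iff₀ (by positivity) hden, hLa, hκa]
  have e1 : l ^ 2 * (1 - 4 * k ^ 2 * a * (a + l) / η ^ 2) =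
      l / (η ^ 2 * a) * (l * a * η ^ 2 - 4 * l * a ^ 2 * (a + l) * k ^ 2) := by
    field_simp
  have e2 : 2 * l * (a + l) ^ 2 / (η ^ 2 * a) * (η - k * (η + l)) ^ 2 =
      l / (η ^ 2 * a) * (2 * (a + l) ^ 2 * (η - k * (η + l)) ^ 2) := by
    field_simp
  rw [e1, e2]
  refine mul_le_mul_of_nonneg_left ?_ (by positivity)
  linarith

/-! ### The quasi-variational inequality -/

/-- A quasi-variational inequality is solved by a fixed point of the map sending `w` to the
solution of the variational inequality on `K w`, a contraction by `vi_estimate`. -/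
theorem exists_qvi {H : Type*} [NormedAddCommGroup H] [InnerProductSpace ℝ H]
    [CompleteSpace H] {Ω : Set H} (hne : Ω.Nonempty) (hcl : IsClosed Ω) (K : H → Set H)
    (hKne : ∀ w ∈ Ω, (K w).Nonempty) (hKcl : ∀ w ∈ Ω, IsClosed (K w))
    (hKcv : ∀ w ∈ Ω, Convex ℝ (K w)) (hKΩ : ∀ w ∈ Ω, K w ⊆ Ω) (F : H → H) {l η k : ℝ}
    (hl : 0 < l) (hη : 0 < η) (hk : 0 ≤ k) (hc : k * (1 + l / η) < 1)
    (hF : ∀ a ∈ Ω, ∀ b ∈ Ω, ‖F a - F b‖ ≤ l * ‖a - b‖)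
    (hpm : ∀ w ∈ Ω, ∀ a ∈ K w, ∀ b ∈ K w,
      0 ≤ ⟪F b, a - b⟫ → η * ‖a - b‖ ^ 2 ≤ ⟪F a, a - b⟫)
    (hproj : ∀ u₁ ∈ Ω, ∀ u₂ ∈ Ω, ∀ p, ‖proj (K u₂) p - proj (K u₁) p‖ ≤ k * ‖u₂ - u₁‖) :
    ∃ u ∈ Ω, u ∈ K u ∧ ∀ v ∈ K u, 0 ≤ ⟪F u, v - u⟫ := by
  have hFc : ContinuousOn F Ω :=
    (LipschitzOnWith.of_dist_le_mul (K := ⟨l, hl.le⟩) fun a ha b hb => by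
      rw [dist_eq_norm, dist_eq_norm]; exact hF a ha b hb).continuousOn
  have hex : ∀ w : Ω, ∃ z ∈ K w, ∀ v ∈ K w, 0 ≤ ⟪F z, v - z⟫ := fun w =>
    exists_vi (hKne w w.2) (hKcl w w.2) (hKcv w w.2) F (hFc.mono (hKΩ w w.2)) η hη (hpm w w.2)
  choose S hS hSv using hex
  let S' : Ω → Ω := fun w => ⟨S w, hKΩ w w.2 (hS w)⟩
  have hcon : ContractingWith ⟨k * (1 + l / η), by positivity⟩ S' := by
    refine ⟨hc, LipschitzWith.of_dist_le_mul fun a b => ?_⟩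
    rw [Subtype.dist_eq, Subtype.dist_eq, dist_eq_norm, dist_eq_norm]
    have := vi_estimate (hKcl a a.2) (hKcv a a.2) (hKcl b b.2) (hKcv b b.2) F F (hS a) (hS b)
      (hSv a) (hSv b) (δ := 0) (d := k * ‖(a : H) - b‖) hη hl (by positivity)
      (fun p => by rw [norm_sub_rev (a : H)]; exact hproj a a.2 b b.2 p)
      (hpm a a.2) (fun z hz => by
        rw [zero_add]
        exact hF z (hKΩ a a.2 hz) _ (hKΩ b b.2 (hS b)))
    refine this.trans (le_of_eq ?_)
    show _ = k * (1 + l / η) * ‖(a : H) - b‖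
    ring
  have : Nonempty Ω := hne.to_subtype
  have : CompleteSpace Ω := hcl.completeSpace_coe
  have hfix : S (ContractingWith.fixedPoint S' hcon) = (ContractingWith.fixedPoint S' hcon : Ω) :=
    congrArg Subtype.val hcon.fixedPoint_isFixedPt
  set w := ContractingWith.fixedPoint S' hcon
  have h1 := hS w
  have h2 := hSv w
  rw [hfix] at h1 h2
  exact ⟨w, w.2, h1, h2⟩

/-! ### The fractional integral equation -/

open MeasureTheory in
theorem intervalIntegrable_kernel {q : ℝ} (hq : 0 < q) (s : ℝ) :
    IntervalIntegrable (fun ζ : ℝ => (s - ζ) ^ (q - 1)) volume 0 s := by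
  have h := (intervalIntegral.intervalIntegrable_rpow' (a := s) (b := 0)
    (r := q - 1) (by linarith)).comp_sub_left s (by finiteness)
  simpa using h

open MeasureTheory in
/-- Rescaling to `s ^ q • ∫ r in 0..1, (1 - r) ^ (q - 1) • h (s * r)` turns continuity of the
fractional integral into dominated convergence. -/
theorem continuousOn_fracInt {E : Type*} [NormedAddCommGroup E] [NormedSpace ℝ E]
    {T q : ℝ} (hT : 0 < T) (hq : 0 < q) (h : ℝ → E) (hh : ContinuousOn h (Icc 0 T)) :
    ContinuousOn (fun s => ∫ ζ in (0:ℝ)..s, ((s - ζ) ^ (q - 1)) • h ζ) (Icc 0 T) := by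
  let h' : ℝ → E := fun s => h (projIcc 0 T hT.le s)
  have hh'c : Continuous h' := hh.comp_continuous
    (continuous_subtype_val.comp continuous_projIcc) fun s => (projIcc 0 T hT.le s).2
  have hh' : ∀ s ∈ Icc 0 T, h' s = h s := fun s hs => by
    simp only [h', projIcc_of_mem hT.le hs]
  obtain ⟨C, hC⟩ := isCompact_Icc.exists_bound_of_continuousOn hh
  have hC' : ∀ s, ‖h' s‖ ≤ C := fun s => hC _ (projIcc 0 T hT.le s).2
  have hcont : Continuous fun s : ℝ =>
      s ^ q • ∫ r in (0:ℝ)..1, ((1 - r) ^ (q - 1)) • h' (s * r) := by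
    refine (Real.continuous_rpow_const hq.le).smul ?_
    refine intervalIntegral.continuous_of_dominated_interval
      (bound := fun r => (1 - r) ^ (q - 1) * C) (fun s => ?_) (fun s => ?_)
      ((intervalIntegrable_kernel hq 1).mul_const C) ?_
    · refine AEStronglyMeasurable.smul ?_ ?_
      · exact ((measurable_const.sub measurable_id).pow_const _).aestronglyMeasurable
      · exact (hh'c.comp (by fun_prop)).aestronglyMeasurable
    · refine Filter.Eventually.of_forall fun r hr => ?_
      rw [uIoc_of_le zero_le_one] at hr
      have : 0 ≤ (1 - r) ^ (q - 1) := Real.rpow_nonneg (by linarith [hr.2]) _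
      rw [norm_smul, Real.norm_of_nonneg this]
      gcongr
      exact hC' _
    · exact Filter.Eventually.of_forall fun r _ => by fun_prop
  refine hcont.continuousOn.congr fun s hs => ?_
  rcases hs.1.eq_or_lt with rfl | hs0
  · simp [Real.zero_rpow hq.ne']
  have h1 := intervalIntegral.smul_integral_comp_mul_left (a := 0) (b := 1)
    (fun ζ => ((s - ζ) ^ (q - 1)) • h ζ) s
  rw [mul_zero, mul_one] at h1
  beta_reduce
  rw [← h1, show s ^ q = s * s ^ (q - 1) by
    rw [Real.rpow_sub_one hs0.ne']; field_simp, mul_smul, ← intervalIntegral.integral_smul (s ^ (q - 1))]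
  congr 1
  refine intervalIntegral.integral_congr fun r hr => ?_
  rw [uIcc_of_le zero_le_one] at hr
  rw [hh' (s * r) ⟨mul_nonneg hs0.le hr.1,
    (mul_le_of_le_one_right hs0.le hr.2).trans hs.2⟩, smul_smul,
    ← Real.mul_rpow hs0.le (by linarith [hr.2])]
  congr 2
  ring

open MeasureTheory in
/-- Unique solvability of a nonlocal fractional Volterra equation: the solution operator
contracts the weighted norm `sup_s e^{-γ s} ‖x s‖`. In terms of `z s = e^{-γ s} x s` this is the
sup norm of `C(I, E)`. -/
theorem volterra_unique {E : Type*} [NormedAddCommGroup E] [NormedSpace ℝ E] [CompleteSpace E]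
    {T q : ℝ} (hT : 0 < T) (hq : 0 < q) (x₀ : E) (N : ℝ → E → E) {Λ : ℝ} (hΛ : 0 ≤ Λ)
    (hNc : ContinuousOn (fun p : ℝ × E => N p.1 p.2) (Icc (0:ℝ) T ×ˢ (univ : Set E)))
    (hNLip : ∀ s ∈ Icc (0:ℝ) T, ∀ x₁ x₂ : E, ‖N s x₂ - N s x₁‖ ≤ Λ * ‖x₂ - x₁‖)
    (ψ : (ℝ → E) → E) (γ lψ : ℝ) (hγ : 0 < γ) (hlψ0 : 0 < lψ)
    (hψLip : ∀ y₁ y₂ : ℝ → E, ContinuousOn y₁ (Icc 0 T) → ContinuousOn y₂ (Icc 0 T) →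
      ‖ψ y₂ - ψ y₁‖ ≤ lψ * sSup ((fun s => Real.exp (-(γ * s)) * ‖y₂ s - y₁ s‖) '' Icc 0 T))
    (hsmall : lψ + Λ / Real.Gamma q *
      sSup ((fun s => ∫ ζ in (0:ℝ)..s, (s - ζ) ^ (q - 1) * Real.exp (-(γ * (s - ζ)))) ''
        Icc (0:ℝ) T) < 1) :
    ∃ x : ℝ → E, ContinuousOn x (Icc 0 T) ∧
      (∀ s ∈ Icc (0:ℝ) T, x s = x₀ + ψ x + (Real.Gamma q)⁻¹ •
        ∫ ζ in (0:ℝ)..s, ((s - ζ) ^ (q - 1)) • N ζ (x ζ)) ∧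
      ∀ x' : ℝ → E, ContinuousOn x' (Icc 0 T) →
        (∀ s ∈ Icc (0:ℝ) T, x' s = x₀ + ψ x' + (Real.Gamma q)⁻¹ •
          ∫ ζ in (0:ℝ)..s, ((s - ζ) ^ (q - 1)) • N ζ (x' ζ)) →
        ∀ s ∈ Icc (0:ℝ) T, x' s = x s := by
  have hΓ : 0 < Real.Gamma q := Real.Gamma_pos_of_pos hq
  set J : ℝ → ℝ := fun s => ∫ ζ in (0:ℝ)..s, (s - ζ) ^ (q - 1) * Real.exp (-(γ * (s - ζ)))
    with hJ
  have hkexp : ∀ s : ℝ, IntervalIntegrable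
      (fun ζ : ℝ => (s - ζ) ^ (q - 1) * Real.exp (-(γ * (s - ζ)))) volume 0 s := fun s =>
    (intervalIntegrable_kernel hq s).mul_continuousOn (by fun_prop)
  have hJ0 : ∀ s ∈ Icc (0:ℝ) T, 0 ≤ J s := fun s hs =>
    intervalIntegral.integral_nonneg hs.1 fun ζ hζ =>
      mul_nonneg (Real.rpow_nonneg (by linarith [hζ.2]) _) (Real.exp_pos _).le
  -- the supremum in the smallness condition is that of a bounded set
  have hJb : BddAbove (J '' Icc (0:ℝ) T) := by
    refine ⟨T ^ q / q, ?_⟩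
    rintro _ ⟨s, hs, rfl⟩
    have h1 : J s ≤ ∫ ζ in (0:ℝ)..s, (s - ζ) ^ (q - 1) := by
      refine intervalIntegral.integral_mono_on hs.1 (hkexp s) (intervalIntegrable_kernel hq s)
        fun ζ hζ => ?_
      refine mul_le_of_le_one_right (Real.rpow_nonneg (by linarith [hζ.2]) _) ?_
      rw [Real.exp_le_one_iff]
      nlinarith [mul_nonneg hγ.le (sub_nonneg.2 hζ.2)]
    have h2 : ∫ ζ in (0:ℝ)..s, (s - ζ) ^ (q - 1) = s ^ q / q := by
      rw [intervalIntegral.integral_comp_sub_left (fun r : ℝ => r ^ (q - 1)) s, sub_self,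
        sub_zero, integral_rpow (Or.inl (by linarith)), sub_add_cancel, Real.zero_rpow hq.ne',
        sub_zero]
    rw [h2] at h1
    refine h1.trans ?_
    gcongr
    exacts [hs.1, hs.2]
  set Js := sSup (J '' Icc (0:ℝ) T) with hJs
  have hJle : ∀ s ∈ Icc (0:ℝ) T, J s ≤ Js := fun s hs => le_csSup hJb ⟨s, hs, rfl⟩
  have hJs0 : 0 ≤ Js := (hJ0 0 ⟨le_rfl, hT.le⟩).trans (hJle 0 ⟨le_rfl, hT.le⟩)
  set c := lψ + Λ / Real.Gamma q * Js with hc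
  have hc0 : 0 ≤ c := by positivity
  let Φ : (ℝ → E) → ℝ → E := fun x s => x₀ + ψ x + (Real.Gamma q)⁻¹ •
        ∫ ζ in (0:ℝ)..s, ((s - ζ) ^ (q - 1)) • N ζ (x ζ)
  have hNx : ∀ x : ℝ → E, ContinuousOn x (Icc 0 T) →
      ContinuousOn (fun ζ => N ζ (x ζ)) (Icc 0 T) := fun x hx =>
    hNc.comp (continuousOn_id.prodMk hx) fun s hs => ⟨hs, mem_univ _⟩
  have hΦc : ∀ x : ℝ → E, ContinuousOn x (Icc 0 T) → ContinuousOn (Φ x) (Icc 0 T) :=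
    fun x hx => continuousOn_const.add
      ((continuousOn_fracInt hT hq _ (hNx x hx)).const_smul _)
  have core : ∀ x y : ℝ → E, ContinuousOn x (Icc 0 T) → ContinuousOn y (Icc 0 T) →
      ∀ M : ℝ, 0 ≤ M → (∀ s ∈ Icc (0:ℝ) T, ‖x s - y s‖ ≤ Real.exp (γ * s) * M) →
      ∀ s ∈ Icc (0:ℝ) T, ‖Φ x s - Φ y s‖ ≤ Real.exp (γ * s) * (c * M) := by
    intro x y hx hy M hM hxy s hs
    have hψ : ‖ψ x - ψ y‖ ≤ lψ * M := by
      refine (hψLip y x hy hx).trans ?_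
      gcongr
      refine csSup_le (Set.Nonempty.image _ ⟨0, le_rfl, hT.le⟩) ?_
      rintro _ ⟨r, hr, rfl⟩
      have := mul_le_mul_of_nonneg_left (hxy r hr) (Real.exp_pos (-(γ * r))).le
      rwa [← mul_assoc, ← Real.exp_add, neg_add_cancel, Real.exp_zero, one_mul] at this
    have hsub : uIcc 0 s ⊆ Icc 0 T := by
      rw [uIcc_of_le hs.1]
      exact Icc_subset_Icc_right hs.2
    have hi : ∀ x : ℝ → E, ContinuousOn x (Icc 0 T) →
        IntervalIntegrable (fun ζ => ((s - ζ) ^ (q - 1)) • N ζ (x ζ)) volume 0 s := fun x hx =>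
      (intervalIntegrable_kernel hq s).smul_continuousOn ((hNx x hx).mono hsub)
    have hint : ‖(∫ ζ in (0:ℝ)..s, ((s - ζ) ^ (q - 1)) • N ζ (x ζ)) -
        ∫ ζ in (0:ℝ)..s, ((s - ζ) ^ (q - 1)) • N ζ (y ζ)‖ ≤
        Λ * M * Real.exp (γ * s) * J s := by
      rw [← intervalIntegral.integral_sub (hi x hx) (hi y hy), hJ]
      simp only
      rw [← intervalIntegral.integral_const_mul]
      refine intervalIntegral.norm_integral_le_of_norm_le hs.1
        (Filter.Eventually.of_forall fun ζ hζ => ?_) ((hkexp s).const_mul _)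
      have hζT : ζ ∈ Icc 0 T := ⟨hζ.1.le, hζ.2.trans hs.2⟩
      have hk : 0 ≤ (s - ζ) ^ (q - 1) := Real.rpow_nonneg (by linarith [hζ.2]) _
      rw [← smul_sub, norm_smul, Real.norm_of_nonneg hk]
      have h1 : ‖N ζ (x ζ) - N ζ (y ζ)‖ ≤ Λ * (Real.exp (γ * ζ) * M) :=
        (hNLip ζ hζT _ _).trans (mul_le_mul_of_nonneg_left (hxy ζ hζT) hΛ)
      have h2 : Real.exp (γ * ζ) = Real.exp (γ * s) * Real.exp (-(γ * (s - ζ))) := by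
        rw [← Real.exp_add]; congr 1; ring
      rw [h2] at h1
      calc _ ≤ (s - ζ) ^ (q - 1) *
            (Λ * (Real.exp (γ * s) * Real.exp (-(γ * (s - ζ))) * M)) :=
            mul_le_mul_of_nonneg_left h1 hk
        _ = _ := by ring
    have hexp : 1 ≤ Real.exp (γ * s) := Real.one_le_exp (mul_nonneg hγ.le hs.1)
    have e : Φ x s - Φ y s = (ψ x - ψ y) + (Real.Gamma q)⁻¹ •
        ((∫ ζ in (0:ℝ)..s, ((s - ζ) ^ (q - 1)) • N ζ (x ζ)) -
        ∫ ζ in (0:ℝ)..s, ((s - ζ) ^ (q - 1)) • N ζ (y ζ)) := by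
      simp only [Φ]
      module
    rw [e]
    refine (norm_add_le _ _).trans ?_
    rw [norm_smul, Real.norm_of_nonneg (inv_nonneg.2 hΓ.le)]
    calc _ ≤ lψ * M + (Real.Gamma q)⁻¹ * (Λ * M * Real.exp (γ * s) * J s) := by gcongr
      _ ≤ Real.exp (γ * s) * (lψ * M) +
          (Real.Gamma q)⁻¹ * (Λ * M * Real.exp (γ * s) * Js) := by
        refine add_le_add (le_mul_of_one_le_left (by positivity) hexp) ?_
        have := hJle s hs
        gcongr
      _ = _ := by rw [hc]; field_simp
  let X : C(Icc (0:ℝ) T, E) → ℝ → E := fun z s =>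
    Real.exp (γ * s) • IccExtend hT.le z s
  have hX : ∀ z, Continuous (X z) := fun z =>
    (by fun_prop : Continuous fun s : ℝ => Real.exp (γ * s)).smul z.continuous.Icc_extend'
  let W : (x : ℝ → E) → ContinuousOn x (Icc 0 T) → C(Icc (0:ℝ) T, E) := fun x hx =>
    ⟨fun s => Real.exp (-(γ * s)) • x s,
      (by fun_prop : Continuous fun s : Icc (0:ℝ) T => Real.exp (-(γ * (s : ℝ)))).smul
        (hx.comp_continuous continuous_subtype_val fun s => s.2)⟩
  have hW : ∀ x hx (s : Icc (0:ℝ) T), W x hx s = Real.exp (-(γ * s)) • x s :=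
    fun _ _ _ => rfl
  have hXW : ∀ x hx, ∀ s ∈ Icc (0:ℝ) T, X (W x hx) s = x s := by
    intro x hx s hs
    simp only [X]
    rw [IccExtend_of_mem hT.le _ hs, hW x hx, smul_smul, ← Real.exp_add, add_neg_cancel, Real.exp_zero, one_smul]
  let S : C(Icc (0:ℝ) T, E) → C(Icc (0:ℝ) T, E) := fun z =>
    W (Φ (X z)) (hΦc _ (hX z).continuousOn)
  have hcon : ContractingWith ⟨c, hc0⟩ S := by
    refine ⟨hsmall, LipschitzWith.of_dist_le_mul fun z w => ?_⟩
    refine (ContinuousMap.dist_le (mul_nonneg hc0 dist_nonneg)).2 fun s => ?_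
    have h := core (X z) (X w) (hX z).continuousOn (hX w).continuousOn (dist z w) dist_nonneg
      (fun r hr => by
        simp only [X]
        rw [← smul_sub, norm_smul, Real.norm_of_nonneg (Real.exp_pos _).le, ← dist_eq_norm]
        gcongr
        exact ContinuousMap.dist_apply_le_dist _) s s.2
    rw [dist_eq_norm]
    simp only [S]
    rw [hW _ (hΦc _ (hX z).continuousOn), hW _ (hΦc _ (hX w).continuousOn), ← smul_sub, norm_smul, Real.norm_of_nonneg (Real.exp_pos _).le]
    have := mul_le_mul_of_nonneg_left h (Real.exp_pos (-(γ * s))).le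
    rwa [← mul_assoc, ← Real.exp_add, neg_add_cancel, Real.exp_zero, one_mul] at this
  have hfix : S (hcon.fixedPoint S) = hcon.fixedPoint S := hcon.fixedPoint_isFixedPt
  refine ⟨X (hcon.fixedPoint S), (hX _).continuousOn, fun s hs => ?_, fun x' hx' he s hs => ?_⟩
  · have h := hXW (Φ (X (hcon.fixedPoint S))) (hΦc _ (hX _).continuousOn) s hs
    change X (S (hcon.fixedPoint S)) s = _ at h
    rwa [hfix] at h
  · have hSW : S (W x' hx') = W x' hx' := by
      ext r
      simp only [S]
      rw [hW _ (hΦc _ (hX _).continuousOn), hW _ hx']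
      congr 1
      -- `X (W x')` and `x'` agree on `I`, hence so do their images
      have h := core (X (W x' hx')) x' (hX _).continuousOn hx' 0 le_rfl
        (fun t ht => by rw [hXW x' hx' t ht]; simp) r r.2
      rw [mul_zero, mul_zero] at h
      have h0 := sub_eq_zero.1 (norm_le_zero_iff.1 h)
      rw [he r r.2]
      exact h0
    rw [← hXW x' hx' s hs, hcon.fixedPoint_unique hSW]

/-! ### Well-posedness of the quasi-complementarity problem -/

/-- Corollary 3.1: unique solvability of the NFDQCP when `K(u) = φ(u) + Ω` with `Ω`
a closed convex cone, under (H₁)–(H₄), (H₅') and `L < 1`. -/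
theorem nfdqcp_unique_solution
    {H₁ H₂ : Type*} [NormedAddCommGroup H₁] [InnerProductSpace ℝ H₁] [CompleteSpace H₁]
    [NormedAddCommGroup H₂] [InnerProductSpace ℝ H₂] [CompleteSpace H₂]
    (T : ℝ) (hT : 0 < T) (q : ℝ) (hq : q ∈ Ioc (0:ℝ) 1) (x₀ : H₁)
    -- Ω is a nonempty closed convex cone
    (Ω : Set H₂) (hΩne : Ω.Nonempty) (hΩcl : IsClosed Ω) (hΩcv : Convex ℝ Ω)
    (hΩcone : ∀ w ∈ Ω, ∀ c : ℝ, 0 ≤ c → c • w ∈ Ω)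
    -- K(u) = φ(u) + Ω
    (φ : H₂ → H₂) (hφ : ∀ w ∈ Ω, φ w ∈ Ω)
    (K : H₂ → Set H₂) (hKdef : ∀ u : H₂, K u = (fun w => φ u + w) '' Ω)
    (G : ℝ → H₁ → H₂ → H₂) (lG ηG : ℝ) (hlG : 0 < lG) (hηG : 0 < ηG)
    -- (H₁)
    (hGLip : ∀ s₁ ∈ Icc (0:ℝ) T, ∀ s₂ ∈ Icc (0:ℝ) T, ∀ (x₁ x₂ : H₁), ∀ u₁ ∈ Ω, ∀ u₂ ∈ Ω,
      ‖G s₂ x₂ u₂ - G s₁ x₁ u₁‖ ≤ lG * (|s₂ - s₁| + ‖x₂ - x₁‖ + ‖u₂ - u₁‖))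
    (hGpm : ∀ s ∈ Icc (0:ℝ) T, ∀ (x : H₁), ∀ u ∈ Ω, ∀ u₁ ∈ K u, ∀ u₂ ∈ K u,
      0 ≤ ⟪G s x u₂, u₁ - u₂⟫ → ηG * ‖u₁ - u₂‖ ^ 2 ≤ ⟪G s x u₁, u₁ - u₂⟫)
    -- (H₂)
    (lK : ℝ) (hlK : 0 ≤ lK)
    (hKproj : ∀ u₁ ∈ Ω, ∀ u₂ ∈ Ω, ∀ ϖ : H₂,
      ‖proj (K u₂) ϖ - proj (K u₁) ϖ‖ ≤ lK * ‖u₂ - u₁‖)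
    -- (H₃)
    (g : ℝ → H₁ → H₂ → H₁) (lg : ℝ) (hlg : 0 < lg)
    (hgc : ContinuousOn (fun p : ℝ × H₁ × H₂ => g p.1 p.2.1 p.2.2)
      (Icc (0:ℝ) T ×ˢ (univ : Set (H₁ × H₂))))
    (hgLip : ∀ s ∈ Icc (0:ℝ) T, ∀ (x₁ x₂ : H₁) (u₁ u₂ : H₂),
      ‖g s x₂ u₂ - g s x₁ u₁‖ ≤ lg * (‖x₂ - x₁‖ + ‖u₂ - u₁‖))
    -- (H₄)
    (f : ℝ → H₁ → H₁) (lf : ℝ) (hlf : 0 < lf)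
    (hfc : ContinuousOn (fun p : ℝ × H₁ => f p.1 p.2) (Icc (0:ℝ) T ×ˢ (univ : Set H₁)))
    (hfLip : ∀ s ∈ Icc (0:ℝ) T, ∀ x₁ x₂ : H₁, ‖f s x₂ - f s x₁‖ ≤ lf * ‖x₂ - x₁‖)
    -- (H₅')
    (ψ : (ℝ → H₁) → H₁) (γ lψ : ℝ) (hγ : 0 < γ) (hlψ0 : 0 < lψ) (hlψ1 : lψ < 1)
    (hψLip : ∀ y₁ y₂ : ℝ → H₁, ContinuousOn y₁ (Icc 0 T) → ContinuousOn y₂ (Icc 0 T) →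
      ‖ψ y₂ - ψ y₁‖ ≤ lψ * sSup ((fun s => Real.exp (-(γ * s)) * ‖y₂ s - y₁ s‖) '' Icc 0 T))
    (hsmall : lψ + (lf + xiconst lg lK lG ηG) / Real.Gamma q *
      sSup ((fun s => ∫ ζ in (0:ℝ)..s, (s - ζ) ^ (q - 1) * Real.exp (-(γ * (s - ζ)))) ''
        Icc (0:ℝ) T) < 1)
    -- L < 1
    (hL : Lconst lK lG ηG < 1) :
    ∃ (x : ℝ → H₁) (u : ℝ → H₂),
      IsNFDQCPSol T q x₀ ψ f g G Ω φ x u ∧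
      ∀ (x' : ℝ → H₁) (u' : ℝ → H₂), IsNFDQCPSol T q x₀ ψ f g G Ω φ x' u' →
        ∀ s ∈ Icc (0:ℝ) T, x' s = x s ∧ u' s = u s := by
  have hq0 : 0 < q := hq.1
  have hΩ0 : (0 : H₂) ∈ Ω := by
    obtain ⟨w, hw⟩ := hΩne
    simpa using hΩcone w hw 0 le_rfl
  have hΩadd : ∀ a ∈ Ω, ∀ b ∈ Ω, a + b ∈ Ω := by
    intro a ha b hb
    have h := hΩcone _ (hΩcv ha hb (show (0:ℝ) ≤ 1 / 2 by norm_num)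
      (show (0:ℝ) ≤ 1 / 2 by norm_num) (by norm_num)) 2 (by norm_num)
    convert h using 1
    module
  have hKmem : ∀ u v : H₂, v ∈ K u ↔ v - φ u ∈ Ω := by
    intro u v
    rw [hKdef]
    constructor
    · rintro ⟨w, hw, rfl⟩
      simpa using hw
    · intro h
      exact ⟨_, h, by simp⟩
  have hKne : ∀ w ∈ Ω, (K w).Nonempty := fun w _ => ⟨φ w, by rw [hKmem]; simpa using hΩ0⟩
  have hKcl : ∀ w ∈ Ω, IsClosed (K w) := fun w _ => by
    have : K w = (fun v => v - φ w) ⁻¹' Ω := by ext v; exact hKmem w v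
    rw [this]
    exact hΩcl.preimage (by fun_prop)
  have hKcv : ∀ w ∈ Ω, Convex ℝ (K w) := fun w _ => by
    rw [hKdef]
    exact hΩcv.translate (φ w)
  have hKΩ : ∀ w ∈ Ω, K w ⊆ Ω := fun w hw v hv => by
    have := hΩadd _ ((hKmem w v).1 hv) _ (hφ w hw)
    simpa using this
  -- complementarity is the quasi-variational inequality on the translated cone
  have hcomp : ∀ (z u : H₂), (u ∈ K u ∧ ∀ v ∈ K u, 0 ≤ ⟪z, v - u⟫) ↔
      (u ∈ (fun w => φ u + w) '' Ω ∧ (∀ v ∈ Ω, 0 ≤ ⟪z, v⟫) ∧ ⟪z, u - φ u⟫ = 0) := by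
    intro z u
    rw [← hKdef]
    constructor
    · rintro ⟨hu, h⟩
      have hpos : ∀ v ∈ Ω, 0 ≤ ⟪z, v⟫ := fun v hv => by
        have := h (u + v) (by
          rw [hKmem, add_sub_right_comm]
          exact hΩadd _ ((hKmem u u).1 hu) _ hv)
        simpa using this
      refine ⟨hu, hpos, le_antisymm ?_ (hpos _ ((hKmem u u).1 hu))⟩
      have := h (φ u) (by rw [hKmem]; simpa using hΩ0)
      rw [← neg_sub, inner_neg_right] at this
      linarith
    · rintro ⟨hu, hpos, h0⟩
      refine ⟨hu, fun v hv => ?_⟩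
      have := hpos _ ((hKmem u v).1 hv)
      rw [show v - u = (v - φ u) - (u - φ u) by abel, inner_sub_right, h0, sub_zero]
      exact this
  have hc := contraction_const hlK hlG hηG hL
  have hex : ∀ (s : ℝ) (x : H₁), ∃ u : H₂, s ∈ Icc (0:ℝ) T →
      u ∈ Ω ∧ u ∈ K u ∧ ∀ v ∈ K u, 0 ≤ ⟪G s x u, v - u⟫ := by
    intro s x
    by_cases hs : s ∈ Icc (0:ℝ) T
    · obtain ⟨u, hu, huK, huv⟩ := exists_qvi hΩne hΩcl K hKne hKcl hKcv hKΩ (G s x) hlG hηG hlK hc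
        (fun a ha b hb => by simpa using hGLip s hs s hs x x b hb a ha)
        (fun w hw a ha b hb => hGpm s hs x w hw a ha b hb) hKproj
      exact ⟨u, fun _ => ⟨hu, huK, huv⟩⟩
    · exact ⟨0, fun h => absurd h hs⟩
  choose U hU using hex
  set θ := Real.sqrt (kconst lG ηG / (1 - Lconst lK lG ηG)) with hθ
  have hest : ∀ s₁ ∈ Icc (0:ℝ) T, ∀ s₂ ∈ Icc (0:ℝ) T, ∀ (x₁ x₂ : H₁) (u₁ u₂ : H₂),
      u₁ ∈ Ω → u₂ ∈ Ω → (u₁ ∈ K u₁ ∧ ∀ v ∈ K u₁, 0 ≤ ⟪G s₁ x₁ u₁, v - u₁⟫) →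
      (u₂ ∈ K u₂ ∧ ∀ v ∈ K u₂, 0 ≤ ⟪G s₂ x₂ u₂, v - u₂⟫) →
      ‖u₁ - u₂‖ ≤ θ * (|s₁ - s₂| + ‖x₁ - x₂‖) := by
    intro s₁ hs₁ s₂ hs₂ x₁ x₂ u₁ u₂ hu₁ hu₂ h₁ h₂
    have h := vi_estimate (hKcl u₁ hu₁) (hKcv u₁ hu₁) (hKcl u₂ hu₂) (hKcv u₂ hu₂)
      (G s₁ x₁) (G s₂ x₂) h₁.1 h₂.1 h₁.2 h₂.2 (δ := |s₁ - s₂| + ‖x₁ - x₂‖)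
      (d := lK * ‖u₁ - u₂‖) hηG hlG (by positivity)
      (fun p => by rw [norm_sub_rev u₁]; exact hKproj u₁ hu₁ u₂ hu₂ p)
      (fun a ha b hb => hGpm s₁ hs₁ x₁ u₁ hu₁ a ha b hb)
      (fun a ha => hGLip s₂ hs₂ s₁ hs₁ x₂ x₁ u₂ hu₂ a (hKΩ u₁ hu₁ ha))
    have hden : 0 < 1 - lK * (1 + lG / ηG) := by linarith
    have h' : ‖u₁ - u₂‖ ≤
        lG / ηG / (1 - lK * (1 + lG / ηG)) * (|s₁ - s₂| + ‖x₁ - x₂‖) := by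
      rw [div_mul_eq_mul_div, le_div_iff₀ hden]
      linarith
    exact h'.trans (mul_le_mul_of_nonneg_right (lipschitz_const hlK hlG hηG hL) (by positivity))
  have hUest : ∀ s₁ ∈ Icc (0:ℝ) T, ∀ s₂ ∈ Icc (0:ℝ) T, ∀ (x₁ x₂ : H₁),
      ‖U s₁ x₁ - U s₂ x₂‖ ≤ θ * (|s₁ - s₂| + ‖x₁ - x₂‖) := fun s₁ hs₁ s₂ hs₂ x₁ x₂ =>
    hest s₁ hs₁ s₂ hs₂ x₁ x₂ _ _ (hU s₁ x₁ hs₁).1 (hU s₂ x₂ hs₂).1 (hU s₁ x₁ hs₁).2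
      (hU s₂ x₂ hs₂).2
  have hθ0 : 0 ≤ θ := Real.sqrt_nonneg _
  have hUc : ContinuousOn (fun p : ℝ × H₁ => U p.1 p.2) (Icc (0:ℝ) T ×ˢ (univ : Set H₁)) := by
    refine (LipschitzOnWith.of_dist_le_mul (K := ⟨2 * θ, by positivity⟩)
      fun p hp r hr => ?_).continuousOn
    rw [dist_eq_norm]
    refine (hUest p.1 hp.1 r.1 hr.1 p.2 r.2).trans ?_
    have h1 : |p.1 - r.1| ≤ dist p r := by
      rw [← Real.dist_eq, Prod.dist_eq]; exact le_max_left _ _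
    have h2 : ‖p.2 - r.2‖ ≤ dist p r := by
      rw [← dist_eq_norm, Prod.dist_eq]; exact le_max_right _ _
    show _ ≤ 2 * θ * dist p r
    calc _ ≤ θ * (dist p r + dist p r) := by gcongr
      _ = _ := by ring
  have hξ : xiconst lg lK lG ηG = lg * (1 + θ) := rfl
  obtain ⟨x, hxc, hx, huniq⟩ := volterra_unique hT hq0 x₀
    (fun ζ x => f ζ x + g ζ x (U ζ x)) (Λ := lf + xiconst lg lK lG ηG)
    (by rw [hξ]; positivity)
    (hfc.add (hgc.comp (continuousOn_fst.prodMk (continuousOn_snd.prodMk hUc))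
      fun p hp => ⟨hp.1, mem_univ _⟩))
    (fun s hs x₁ x₂ => by
      have h1 := hfLip s hs x₁ x₂
      have h2 := hgLip s hs x₁ x₂ (U s x₁) (U s x₂)
      have h3 := hUest s hs s hs x₂ x₁
      rw [sub_self, abs_zero, zero_add] at h3
      have h4 := mul_le_mul_of_nonneg_left h3 hlg.le
      rw [add_sub_add_comm, hξ]
      refine (norm_add_le _ _).trans ?_
      linarith)
    ψ γ lψ hγ hlψ0 hψLip hsmall
  have huc : ∀ y : ℝ → H₁, ContinuousOn y (Icc 0 T) →
      ContinuousOn (fun s => U s (y s)) (Icc 0 T) := fun y hy =>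
    hUc.comp (continuousOn_id.prodMk hy) fun s hs => ⟨hs, mem_univ _⟩
  refine ⟨x, fun s => U s (x s), ⟨hxc, huc x hxc, fun s hs => (hU s (x s) hs).1, hx,
    fun s hs => (hcomp _ _).1 (hU s (x s) hs).2⟩, ?_⟩
  rintro x' u' ⟨hx'c, -, hu'Ω, hx', hu'⟩
  have hu'U : ∀ s ∈ Icc (0:ℝ) T, u' s = U s (x' s) := by
    intro s hs
    have h := hest s hs s hs (x' s) (x' s) _ _ (hu'Ω s hs) (hU s (x' s) hs).1
      ((hcomp _ _).2 (hu' s hs)) (hU s (x' s) hs).2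
    rw [sub_self, sub_self, abs_zero, norm_zero, add_zero, mul_zero] at h
    exact sub_eq_zero.1 (norm_le_zero_iff.1 h)
  have hxx : ∀ s ∈ Icc (0:ℝ) T, x' s = x s := by
    refine huniq x' hx'c fun s hs => ?_
    rw [hx' s hs]
    congr 2
    refine intervalIntegral.integral_congr fun ζ hζ => ?_
    rw [uIcc_of_le hs.1] at hζ
    rw [hu'U ζ ⟨hζ.1, hζ.2.trans hs.2⟩]
  intro s hs
  refine ⟨hxx s hs, ?_⟩
  rw [hu'U s hs, hxx s hs]
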